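/- For every infinite cardinal κ, u(κ) ≤ u(κ⁺)^{cf(κ)}. -/

import Mathlib

open Cardinal Set

universe u v

/-- An ultrafilter is uniform if all of its members have full cardinality. -/
def Uniform {α : Type u} (U : Ultrafilter α) : Prop := ∀ X ∈ U, #X = #α

/-- An ultrafilter `U` over `S` is `l`-decomposable if there is `f : S → l`
such that preimages of sets of size `< l` are not in `U`. -/
def Decomposable {S : Type u} (U : Ultrafilter S) (l : Cardinal.{v}) : Prop :=
  ∃ f : S → l.out, ∀ X : Set l.out, #X < l → f ⁻¹' X ∉ U

/-- The character of an ultrafilter: the least cardinality of a base. -/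
noncomputable def charU {α : Type u} (U : Ultrafilter α) : Cardinal.{u} :=
  sInf {c | ∃ B : Set (Set α), #B = c ∧ (∀ X ∈ B, X ∈ U) ∧ ∀ Y ∈ U, ∃ X ∈ B, X ⊆ Y}

/-- The ultrafilter number at a cardinal `κ`: the minimal character of a
uniform ultrafilter over (a set of size) `κ`. -/
noncomputable def uNumber (κ : Cardinal.{u}) : Cardinal.{u} :=
  sInf {c | ∃ U : Ultrafilter κ.out, Uniform U ∧ charU U = c}

/-! Let `U` be a uniform ultrafilter over `κ⁺` of least character. If `κ` is regular, then
`u(κ) ≤ 2 ^ κ ≤ χ(U) ^ κ`. If `κ` is singular, then for every `μ < κ` there is a map to `κ` all of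
whose images of members of `U` have more than `μ` elements; the sum of the images of `U` under such
maps, for a cofinal family of cardinals `μ` indexed by `cf(κ)`, is uniform and has character at most
`χ(U) ^ cf(κ)`.

Suppose there is no such map for `μ`, where `cf(κ) ≤ μ`. By club guessing, a sufficiently increasing
sequence of length `κ⁺` in a product of `cf(κ)` many successor cardinals below `κ` has Shelah's
bounding projection property modulo tails. Hence it has a least upper bound `p`, whose coordinates
have cofinalities tending to `κ`. Each `s < κ⁺` is a union of `cf(κ)` many sets of size less than
`κ`, and indecomposability turns these into sets `F s` of size less than `κ` such that each `ξ` in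
an unbounded set lies in `F s` for almost all `s`. At some coordinate, depending on `s`, the
cofinality of `p` exceeds the size of `F s`, so the values below `p` of the sequence at indices in
`F s` have a bound below `p`. Indecomposability leaves only `μ` many such bounds, and the bounding
projection property turns them into an upper bound of the whole sequence that is smaller than
`p`. -/

theorem exists_forall_restrict {R : Type u} [LinearOrder R] [WellFoundedLT R] {β : Type v}
    {P : ∀ i : R, (Iio i → β) → β → Prop} (h : ∀ i p, ∃ w, P i p w) :
    ∃ ξ : R → β, ∀ i, P i (fun j => ξ j) (ξ i) := by
  choose next hnext using h
  refine ⟨wellFounded_lt.fix fun i ih => next i fun j => ih j j.2, fun i => ?_⟩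
  conv => arg 3; rw [WellFounded.fix_eq]
  exact hnext i _

section Cofinality

variable {X : Type u} [LinearOrder X]

theorem exists_forall_lt_of_mk_lt_cof {ι : Type u} (f : ι → X) (h : #ι < Order.cof X) :
    ∃ x, ∀ i, f i < x := by
  obtain ⟨x, hx⟩ := not_isCofinal_iff.1 fun hf : IsCofinal (range f) =>
    ((Order.cof_le hf).trans mk_range_le).not_gt h
  exact ⟨x, fun i => hx _ ⟨i, rfl⟩⟩

theorem noMaxOrder_of_aleph0_le_cof (h : ℵ₀ ≤ Order.cof X) : NoMaxOrder X := by
  refine ⟨fun x => ?_⟩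
  obtain ⟨y, hy⟩ := exists_forall_lt_of_mk_lt_cof (fun _ : PUnit => x)
    (by simpa only [mk_fintype, Fintype.card_punit, Nat.cast_one]
      using one_lt_aleph0.trans_le h)
  exact ⟨y, hy ⟨⟩⟩

theorem cof_ord_toType {σ : Cardinal.{u}} (hσ : σ.IsRegular) : Order.cof σ.ord.ToType = σ := by
  rw [Ordinal.cof_toType, hσ.cof_ord]

theorem nonempty_ord_toType {σ : Cardinal.{u}} (hσ : σ.IsRegular) : Nonempty σ.ord.ToType :=
  Order.cof_ne_zero_iff.1 ((cof_ord_toType hσ).trans_ne hσ.pos.ne')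

theorem mk_Iio_ord_toType_lt {σ : Cardinal.{u}} (x : σ.ord.ToType) : #(Iio x) < σ := by
  simpa only [mk_ord_toType] using mk_Iio_lt x (by simp)

theorem noMaxOrder_ord_toType {σ : Cardinal.{u}} (hσ : σ.IsRegular) : NoMaxOrder σ.ord.ToType :=
  noMaxOrder_of_aleph0_le_cof (hσ.aleph0_le.trans_eq (cof_ord_toType hσ).symm)

variable [WellFoundedLT X]

theorem exists_isLeast_of_nonempty {s : Set X} (hs : s.Nonempty) : ∃ x, IsLeast s x :=
  ⟨wellFounded_lt.min _ hs, WellFounded.min_mem _ _ _, fun _ hy => WellFounded.min_le _ hy⟩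

theorem exists_isLUB_of_bddAbove {s : Set X} (hs : BddAbove s) : ∃ x, IsLUB s x :=
  exists_isLeast_of_nonempty hs

theorem exists_isLUB_range {ι : Type u} (f : ι → X) (h : #ι < Order.cof X) :
    ∃ x, IsLUB (range f) x := by
  obtain ⟨x, hx⟩ := exists_forall_lt_of_mk_lt_cof f h
  exact exists_isLUB_of_bddAbove ⟨x, forall_mem_range.2 fun i => (hx i).le⟩

theorem exists_cof_Iio_eq {σ : Cardinal.{u}} (hσ : σ.IsRegular) (h : σ < Order.cof X)
    (b : X → X) : ∃ δ, Order.cof (Iio δ) = σ ∧ ∀ y < δ, ∃ z < δ, y < z ∧ b z < δ := by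
  have := noMaxOrder_ord_toType hσ
  have hcard : #σ.ord.ToType < Order.cof X := by rwa [mk_ord_toType]
  obtain ⟨g, hg⟩ := exists_forall_restrict (R := σ.ord.ToType)
    (P := fun _ p w => ∀ j, max (p j) (b (p j)) < w) fun i p =>
      exists_forall_lt_of_mk_lt_cof _ ((mk_set_le _).trans_lt hcard)
  have hmono : StrictMono g := fun j i hji => (le_max_left _ _).trans_lt (hg i ⟨j, hji⟩)
  obtain ⟨δ, hδ⟩ := exists_isLUB_range g hcard
  have hlt i : g i < δ := by
    obtain ⟨j, hij⟩ := exists_gt i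
    exact (hmono hij).trans_le (hδ.1 ⟨j, rfl⟩)
  have hex y (hy : y < δ) : ∃ i, y < g i := by
    obtain ⟨_, ⟨i, rfl⟩, hi⟩ := (lt_isLUB_iff hδ).1 hy
    exact ⟨i, hi⟩
  refine ⟨δ, ?_, fun y hy => ?_⟩
  · rw [← Order.cof_congr_of_strictMono (f := fun i => (⟨g i, hlt i⟩ : Iio δ)) hmono,
      cof_ord_toType hσ]
    intro y
    obtain ⟨i, hi⟩ := hex y y.2
    exact ⟨_, ⟨i, rfl⟩, hi.le⟩
  · obtain ⟨i, hi⟩ := hex y hy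
    obtain ⟨j, hij⟩ := exists_gt i
    exact ⟨g i, hlt i, hi, (le_max_right _ _).trans_lt ((hg j ⟨i, hij⟩).trans (hlt j))⟩

end Cofinality

section Normal

variable {X R : Type u} [LinearOrder X] [WellFoundedLT X] [LinearOrder R] [WellFoundedLT R]

theorem exists_isNormal_forall_lt (h : #R < Order.cof X) (next : ∀ j : R, (Iic j → X) → X) :
    ∃ ξ : R → X, Order.IsNormal ξ ∧ ∀ i j, i < j → next i (fun k => ξ k) < ξ j := by
  have hup i (p : Iic i → X) : ∃ x, max (p ⟨i, le_rfl⟩) (next i p) < x := by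
    obtain ⟨x, hx⟩ := exists_forall_lt_of_mk_lt_cof
      (fun _ : R => max (p ⟨i, le_rfl⟩) (next i p)) h
    exact ⟨x, hx i⟩
  choose up hup using hup
  obtain ⟨ξ, hξ⟩ := exists_forall_restrict (R := R)
    (P := fun i p w =>
      IsLUB (range fun j : Iio i => up j fun k => p ⟨k, (mem_Iic.1 k.2).trans_lt j.2⟩) w)
    fun i p => exists_isLUB_range _ ((mk_set_le _).trans_lt h)
  have hle {i j} (hij : i < j) : up i (fun k => ξ k) ≤ ξ j := (hξ j).1 ⟨⟨i, hij⟩, rfl⟩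
  have hmono : StrictMono ξ := fun i j hij =>
    (le_max_left _ _).trans_lt ((hup i fun k => ξ k).trans_le (hle hij))
  refine ⟨ξ, ⟨hmono, fun ha x hx => (hξ _).2 ?_⟩, fun i j hij =>
    (le_max_right _ _).trans_lt ((hup i fun k => ξ k).trans_le (hle hij))⟩
  rintro _ ⟨⟨j, hj⟩, rfl⟩
  obtain ⟨k, hjk, hk⟩ := ha.lt_iff_exists_lt.1 hj
  exact (hle hk).trans (hx ⟨k, hjk, rfl⟩)

omit [WellFoundedLT X] in
theorem isClub_range_of_isNormal {f : R → X} (hf : Order.IsNormal f) (hc : IsCofinal (range f)) :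
    IsClub (range f) := by
  refine ⟨fun s hs hne _ a ha => ?_, hc⟩
  obtain ⟨_, ⟨j, rfl⟩, hj⟩ := hc a
  obtain ⟨b, hb⟩ := exists_isLUB_of_bddAbove (s := f ⁻¹' s)
    ⟨j, fun i hi => hf.strictMono.le_iff_le.1 ((ha.1 hi).trans hj)⟩
  have hfb := hf.map_isLUB hb (by obtain ⟨_, hx⟩ := hne; obtain ⟨i, rfl⟩ := hs hx; exact ⟨i, hx⟩)
  rw [image_preimage_eq_of_subset hs] at hfb
  exact ⟨b, hfb.unique ha⟩

theorem isClub_preimage_of_isNormal {f : R → X} (hf : Order.IsNormal f)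
    (hc : IsCofinal (range f)) (hX : Order.cof X ≠ ℵ₀) {E : Set X} (hE : IsClub E) :
    IsClub (f ⁻¹' E) := by
  refine ⟨fun s hs hne _ a ha =>
    hE.isLUB_mem (image_subset_iff.2 hs) (hne.image f) (hf.map_isLUB ha hne), fun i => ?_⟩
  obtain ⟨_, ⟨hjE, j, rfl⟩, hij⟩ :=
    (hE.inter hX (isClub_range_of_isNormal hf hc)).isCofinal (f i)
  exact ⟨j, hjE, hf.strictMono.le_iff_le.1 hij⟩

end Normal

section ClubGuessing

variable {R N : Type u} [LinearOrder R] [WellFoundedLT R] [LinearOrder N] [WellFoundedLT N]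

theorem exists_isGreatest_inter_Iic {E : Set R} (hE : IsClub E) {γ : R}
    (hne : (E ∩ Iic γ).Nonempty) : ∃ d, IsGreatest (E ∩ Iic γ) d := by
  obtain ⟨d, hd⟩ := exists_isLUB_of_bddAbove (s := E ∩ Iic γ) ⟨γ, fun _ hy => hy.2⟩
  exact ⟨d, ⟨hE.isLUB_mem inter_subset_left hne hd, hd.2 fun _ hy => hy.2⟩, hd.1⟩

omit [WellFoundedLT N] in
theorem exists_forall_isGreatest_mem_iInter [Nonempty N] {E : N → Set R}
    (hE : ∀ ν, IsClub (E ν)) (hanti : Antitone E) (γ : R) :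
    ∃ ν₀, ∀ ν ≥ ν₀, ∀ d, IsGreatest (E ν ∩ Iic γ) d → d ∈ ⋂ ν', E ν' := by
  by_cases hne : ∀ ν, (E ν ∩ Iic γ).Nonempty
  · choose d hd using fun ν => exists_isGreatest_inter_Iic (hE ν) (hne ν)
    have hd_anti : Antitone d := fun ν ν' h => (hd ν).2 ⟨hanti h (hd ν').1.1, (hd ν').1.2⟩
    obtain ⟨_, ⟨ν₀, rfl⟩, hmin⟩ := exists_isLeast_of_nonempty (range_nonempty d)
    have hconst ν (hν : ν ≥ ν₀) : d ν = d ν₀ := (hd_anti hν).antisymm (hmin ⟨ν, rfl⟩)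
    refine ⟨ν₀, fun ν hν e he => mem_iInter.2 fun ν' => ?_⟩
    rw [he.unique (hd ν), hconst ν hν, ← hconst _ (le_max_right ν' ν₀)]
    exact hanti (le_max_left ν' ν₀) (hd _).1.1
  · push Not at hne
    obtain ⟨ν₀, hν₀⟩ := hne
    refine ⟨ν₀, fun ν hν d hd => ?_⟩
    exact (hν₀ ▸ (⟨hanti hν hd.1.1, hd.1.2⟩ : d ∈ E ν₀ ∩ Iic γ) : d ∈ (∅ : Set R)).elim

theorem exists_antitone_isClub {F : Set R → Set R} (hF : ∀ E, IsClub (F E))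
    (hR : ℵ₀ < Order.cof R) (hN : #N < Order.cof R) :
    ∃ E : N → Set R, Antitone E ∧ (∀ ν, IsClub (E ν)) ∧ ∀ ν ν', ν < ν' → E ν' ⊆ F (E ν) := by
  obtain ⟨E, hE⟩ := exists_forall_restrict (R := N) (P := fun _ p w => w = ⋂ i, F (p i))
    fun _ p => ⟨_, rfl⟩
  have hsub ν ν' (h : ν < ν') : E ν' ⊆ F (E ν) :=
    (hE ν').trans_subset (iInter_subset_of_subset ⟨ν, h⟩ subset_rfl)
  refine ⟨E, fun ν ν' h => ?_, fun ν => ?_, hsub⟩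
  · rw [hE ν]
    exact subset_iInter fun i => hsub i ν' (lt_of_lt_of_le i.2 h)
  · rw [hE ν]
    refine IsClub.iInter hR.ne' ?_ fun i => hF _
    simpa only [lift_id] using (mk_set_le _).trans_lt hN

-- Shelah's argument: if every guess failed, shrink the club `μ⁺` times, each time avoiding the
-- previous guess; at a suitable `α` the `μ` many greatest elements defining the guess stabilise.
theorem exists_clubGuessing {μ : Cardinal.{u}} (hμ : μ.IsRegular)
    (hR : Order.succ μ < Order.cof R) :
    ∃ C : ∀ α : R, Set (Iio α), ∀ E, IsClub E →
      ∃ α, Order.cof (Iio α) = μ ∧ IsCofinal (C α) ∧ Subtype.val '' C α ⊆ E := by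
  choose c hc_cof hc_card using fun α : R => Order.exists_cof_eq (Iio α)
  let C (E : Set R) (α : R) : Set (Iio α) := {d | ∃ γ ∈ c α, IsGreatest (E ∩ Iic (γ : R)) d}
  by_contra! hcon
  choose F hF hFC using fun E : Set R => hcon (C E)
  have hμR : μ < Order.cof R := (Order.lt_succ μ).trans hR
  have hμ' := isRegular_succ hμ.aleph0_le
  obtain ⟨E, hanti, hE, hEF⟩ := exists_antitone_isClub (N := (Order.succ μ).ord.ToType) hF
    (hμ.aleph0_le.trans_lt hμR) (by rwa [mk_ord_toType])
  have := noMaxOrder_ord_toType hμ'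
  have := nonempty_ord_toType hμ'
  have hE' : IsClub (⋂ ν, E ν) := IsClub.iInter (hμ.aleph0_le.trans_lt hμR).ne'
    (by simpa only [lift_id, mk_ord_toType] using hR) hE
  choose b hbE hb using hE'.isCofinal
  obtain ⟨α, hα, hαb⟩ := exists_cof_Iio_eq hμ hμR b
  choose ν₀ hν₀ using fun γ : c α => exists_forall_isGreatest_mem_iInter hE hanti (γ : R)
  obtain ⟨ν, hν⟩ := exists_forall_lt_of_mk_lt_cof ν₀
    (by rw [hc_card, hα, cof_ord_toType hμ']; exact Order.lt_succ μ)
  refine hFC (E ν) α hα (fun y => ?_) ?_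
  · obtain ⟨z, _, hyz, hbz⟩ := hαb y y.2
    obtain ⟨γ, hγ, hbγ⟩ := hc_cof α ⟨b z, hbz⟩
    have hmem : b z ∈ E ν ∩ Iic (γ : R) := ⟨mem_iInter.1 (hbE z) ν, hbγ⟩
    obtain ⟨d, hd⟩ := exists_isGreatest_inter_Iic (hE ν) ⟨_, hmem⟩
    exact ⟨⟨d, lt_of_le_of_lt hd.1.2 γ.2⟩, ⟨γ, hγ, hd⟩,
      hyz.le.trans ((hb z).trans (hd.2 hmem))⟩
  · rintro _ ⟨d, ⟨γ, hγ, hd⟩, rfl⟩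
    obtain ⟨ν', hνν'⟩ := exists_gt ν
    exact hEF ν ν' hνν' (mem_iInter.1 (hν₀ ⟨γ, hγ⟩ ν (hν _).le d hd) ν')

end ClubGuessing

section Projection

variable {P : Type u} [LinearOrder P] [WellFoundedLT P] [OrderTop P]

/-- The least element of `insert ⊤ S` that is above `x`. -/
noncomputable def proj (S : Set P) (x : P) : P :=
  wellFounded_lt.min {y | x ≤ y ∧ y ∈ insert ⊤ S} ⟨⊤, le_top, mem_insert _ _⟩

theorem isLeast_proj (S : Set P) (x : P) : IsLeast {y | x ≤ y ∧ y ∈ insert ⊤ S} (proj S x) :=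
  ⟨WellFounded.min_mem _ _ _, fun _ hy => WellFounded.min_le _ hy⟩

theorem le_proj (S : Set P) (x : P) : x ≤ proj S x := (isLeast_proj S x).1.1

theorem proj_mem (S : Set P) (x : P) : proj S x ∈ insert ⊤ S := (isLeast_proj S x).1.2

theorem proj_le {S : Set P} {x y : P} (hxy : x ≤ y) (hy : y ∈ insert ⊤ S) : proj S x ≤ y :=
  (isLeast_proj S x).2 ⟨hxy, hy⟩

theorem proj_mono (S : Set P) : Monotone (proj S) := fun _ y h =>
  proj_le (h.trans (le_proj S y)) (proj_mem S y)

end Projection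

section BoundingProjection

variable {I W : Type u} {P : I → Type u} [∀ i, LinearOrder (P i)] [LinearOrder W]
  {κ ν : Cardinal.{u}} {L : Filter I} {f : W → ∀ i, P i}

/-- A sequence of functions increasing modulo the filter `L` which is moreover, at each `δ` whose
cofinality is less than `κ`, increasing up to `δ` simultaneously on a club of indices. The bound on
the cofinality is encoded by the existence of a club of size less than `κ`. -/
structure StronglyIncreasing (κ : Cardinal.{u}) (L : Filter I) (f : W → ∀ i, P i) : Prop where
  eventually_lt : ∀ ⦃ζ s⦄, ζ < s → ∀ᶠ i in L, f ζ i < f s i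
  exists_isClub : ∀ (δ : W) (C : Set (Iio δ)), IsClub C → #C < κ →
    ∃ E : Set (Iio δ), IsClub E ∧ ∀ᶠ i in L, ∀ ζ ∈ E, f ζ i < f δ i

theorem StronglyIncreasing.comp_strictMono {Q : I → Type u} [∀ i, LinearOrder (Q i)]
    (hf : StronglyIncreasing κ L f) {e : ∀ i, P i → Q i} (he : ∀ i, StrictMono (e i)) :
    StronglyIncreasing κ L fun s i => e i (f s i) where
  eventually_lt _ _ h := (hf.eventually_lt h).mono fun i hi => he i hi
  exists_isClub δ C hC hCκ := (hf.exists_isClub δ C hC hCκ).imp fun _ hE =>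
    ⟨hE.1, hE.2.mono fun i hi ζ hζ => he i (hi ζ hζ)⟩

theorem StronglyIncreasing.exists_isClub_forall_lt {R : Type u} [LinearOrder R] [WellFoundedLT R]
    [NoMaxOrder R] [WellFoundedLT W] (hf : StronglyIncreasing κ L f) (hRκ : #R < κ)
    (hRW : #R < Order.cof W) (hR : ℵ₀ < Order.cof R) {ξ : R → W} (hξ : Order.IsNormal ξ) :
    ∃ (δ : W) (E : Set R), IsClub E ∧ ∀ᶠ i in L, ∀ r ∈ E, f (ξ r) i < f δ i := by
  obtain ⟨δ, hδ⟩ := exists_isLUB_range ξ hRW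
  have hlt r : ξ r < δ := by
    obtain ⟨r', hr⟩ := exists_gt r
    exact (hξ.strictMono hr).trans_le (hδ.1 ⟨r', rfl⟩)
  let ξ' : R → Iio δ := fun r => ⟨ξ r, hlt r⟩
  have hξ' : Order.IsNormal ξ' := ⟨hξ.strictMono, fun ha x hx =>
    hξ.mem_lowerBounds_upperBounds_of_isSuccLimit ha (by
      rintro _ ⟨r, hr, rfl⟩
      exact hx ⟨r, hr, rfl⟩)⟩
  have hcof : IsCofinal (range ξ') := fun x => by
    obtain ⟨_, ⟨r, rfl⟩, hr⟩ := (lt_isLUB_iff hδ).1 x.2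
    exact ⟨_, ⟨r, rfl⟩, hr.le⟩
  obtain ⟨E, hE, hfE⟩ := hf.exists_isClub δ _ (isClub_range_of_isNormal hξ' hcof)
    (mk_range_le.trans_lt hRκ)
  have hne : Order.cof (Iio δ) ≠ ℵ₀ := by
    rw [← Order.cof_congr_of_strictMono hξ'.strictMono hcof]
    exact hR.ne'
  exact ⟨δ, ξ' ⁻¹' E, isClub_preimage_of_isNormal hξ' hcof hne hE,
    hfE.mono fun i hi r hr => hi _ hr⟩

variable [∀ i, WellFoundedLT (P i)] [∀ i, OrderTop (P i)]

/-- The bounding projection property: for sets `S i` of size at most `ν`, the projections to `S` of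
some member of `f` bound all of `f` modulo `L`. -/
def BoundingProjection (L : Filter I) (ν : Cardinal.{u}) (f : W → ∀ i, P i) : Prop :=
  ∀ S : ∀ i, Set (P i), (∀ i, #(S i) ≤ ν) → ∃ ξ, ∀ ζ, ∀ᶠ i in L, f ζ i ≤ proj (S i) (f ξ i)

omit [∀ i, WellFoundedLT (P i)] in
theorem mk_sigma_insert_top_le (hν : ℵ₀ ≤ ν) (hI : #I ≤ ν) {S : ∀ i, Set (P i)}
    (hS : ∀ i, #(S i) ≤ ν) : #(Σ i, (insert ⊤ (S i) : Set (P i))) ≤ ν := by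
  have hins i : #(insert ⊤ (S i) : Set (P i)) ≤ ν :=
    mk_insert_le.trans (add_le_of_le hν (hS i) (one_le_aleph0.trans hν))
  rw [mk_sigma]
  exact (sum_le_sum _ _ hins).trans ((sum_const' _ _).trans_le (mul_le_of_le hν hI le_rfl))

theorem mk_le_of_forall_proj_lt {C : Type u} [LinearOrder C] [WellFoundedLT C] [NoMaxOrder C]
    {S : ∀ i, Set (P i)} {m : C → ∀ i, P i} (hm : Monotone m)
    (h : ∀ c d, c < d → ∃ i, proj (S i) (m c i) < m d i) :
    #C ≤ #(Σ i, (insert ⊤ (S i) : Set (P i))) := by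
  have hstep c : ∃ i, ∀ d > c, proj (S i) (m c i) < proj (S i) (m d i) := by
    obtain ⟨c', hc', hmin⟩ := exists_isLeast_of_nonempty (exists_gt c)
    obtain ⟨i, hi⟩ := h c c' hc'
    exact ⟨i, fun d hd => hi.trans_le ((hm (hmin hd) i).trans (le_proj _ _))⟩
  choose i hi using hstep
  let u c j : (insert ⊤ (S j) : Set (P j)) := ⟨proj (S j) (m c j), proj_mem _ _⟩
  have hne c d (hcd : c < d) :
      (⟨i c, u c (i c)⟩ : Σ j, (insert ⊤ (S j) : Set (P j))) ≠ ⟨i d, u d (i d)⟩ := fun heq => by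
    obtain ⟨hidx, hval⟩ := Sigma.mk.inj heq
    rw [← hidx] at hval
    exact (hi c d hcd).ne (congrArg Subtype.val (eq_of_heq hval))
  refine mk_le_of_injective (f := fun c => ⟨i c, u c (i c)⟩) fun c d heq => ?_
  by_contra hcd
  rcases lt_or_gt_of_ne hcd with hlt | hlt
  exacts [hne c d hlt heq, hne d c hlt heq.symm]

theorem exists_isNormal_forall_frequently_proj_lt {R : Type u} [LinearOrder R] [WellFoundedLT R]
    [WellFoundedLT W] (hf : ∀ ⦃ζ s⦄, ζ < s → ∀ᶠ i in L, f ζ i < f s i) (hRW : #R < Order.cof W)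
    {S : ∀ i, Set (P i)} (hS : ∀ ξ, ∃ ζ, ∃ᶠ i in L, proj (S i) (f ξ i) < f ζ i)
    (C : R → Set R) :
    ∃ ξ : R → W, Order.IsNormal ξ ∧ ∀ α c d, c < d →
      (∃ σ, ∀ᶠ i in L, ∀ k ∈ C α, k ≤ c → f (ξ k) i ≤ f σ i) →
      ∃ σ, (∀ᶠ i in L, ∀ k ∈ C α, k ≤ c → f (ξ k) i ≤ f σ i) ∧
        ∃ᶠ i in L, proj (S i) (f σ i) < f (ξ d) i := by
  have hz (D : Set W) : ∃ z, (∃ σ, ∀ᶠ i in L, ∀ s ∈ D, f s i ≤ f σ i) →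
      ∃ σ, (∀ᶠ i in L, ∀ s ∈ D, f s i ≤ f σ i) ∧ ∃ᶠ i in L, proj (S i) (f σ i) < f z i := by
    by_cases hD : ∃ σ, ∀ᶠ i in L, ∀ s ∈ D, f s i ≤ f σ i
    · obtain ⟨σ, hσ⟩ := hD
      obtain ⟨z, hz⟩ := hS σ
      exact ⟨z, fun _ => ⟨σ, hσ, hz⟩⟩
    · obtain ⟨x⟩ := Order.cof_ne_zero_iff.1 (pos_of_gt hRW).ne'
      exact ⟨x, fun h => absurd h hD⟩
  choose z hz using hz
  have hnext c (p : Iic c → W) : ∃ x, ∀ α, z (p '' {k | k.1 ∈ C α}) < x :=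
    exists_forall_lt_of_mk_lt_cof _ hRW
  choose next hnext using hnext
  obtain ⟨ξ, hξ, hlt⟩ := exists_isNormal_forall_lt hRW next
  refine ⟨ξ, hξ, fun α c d hcd hdom => ?_⟩
  have hiff σ i : (∀ s ∈ (fun k : Iic c => ξ k) '' {k | k.1 ∈ C α}, f s i ≤ f σ i) ↔
      ∀ k ∈ C α, k ≤ c → f (ξ k) i ≤ f σ i := by
    simp only [forall_mem_image, Subtype.forall, mem_Iic, mem_ofPred_eq]
    exact forall_congr' fun k => forall_comm
  obtain ⟨σ, hσ, hzσ⟩ := hz ((fun k : Iic c => ξ k) '' {k | k.1 ∈ C α}) (by simpa only [hiff])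
  exact ⟨σ, by simpa only [hiff] using hσ, (hzσ.and_eventually
    (hf ((hnext c (fun k => ξ k) α).trans (hlt c d hcd)))).mono fun i hi => hi.1.trans hi.2⟩

theorem StronglyIncreasing.boundingProjection [WellFoundedLT W] (hf : StronglyIncreasing κ L f)
    (hν : ℵ₀ ≤ ν) (hI : #I ≤ ν) (hνκ : Order.succ (Order.succ (Order.succ ν)) < κ)
    (hκW : κ ≤ Order.cof W) : BoundingProjection L ν f := by
  intro S hS
  by_contra! hcon
  have hμ := isRegular_succ hν
  have hρ := isRegular_succ (hμ.aleph0_le.trans (Order.le_succ _))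
  let R := (Order.succ (Order.succ (Order.succ ν))).ord.ToType
  have hRκ : #R < κ := by rwa [mk_ord_toType]
  have hRcof : Order.succ (Order.succ ν) < Order.cof R :=
    (Order.lt_succ _).trans_eq (cof_ord_toType hρ).symm
  have := noMaxOrder_ord_toType hρ
  obtain ⟨C, hC⟩ := exists_clubGuessing hμ hRcof
  obtain ⟨ξ, hξ, hproj⟩ := exists_isNormal_forall_frequently_proj_lt hf.eventually_lt
    (hRκ.trans_le hκW) (S := S) (by simpa only [Filter.not_eventually, not_le] using hcon)
    fun α => Subtype.val '' C α
  obtain ⟨δ, E, hE, hfE⟩ := hf.exists_isClub_forall_lt hRκ (hRκ.trans_le hκW)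
    ((hμ.aleph0_le.trans_lt (Order.lt_succ _)).trans hRcof) hξ
  obtain ⟨α, hα, hCα, hCE⟩ := hC E hE
  have hCE' (c : C α) : (c : R) ∈ E := hCE ⟨c, c.2, rfl⟩
  have := noMaxOrder_of_aleph0_le_cof (X := C α)
    (by rw [Order.cof_eq_of_isCofinal hCα, hα]; exact hμ.aleph0_le)
  choose m hm using fun (c : C α) i =>
    exists_isLUB_of_bddAbove (s := (fun k : C α => f (ξ k) i) '' Iic c) (OrderTop.bddAbove _)
  have hcard : #(C α) ≤ ν := (mk_le_of_forall_proj_lt (S := S) (m := m)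
    (fun c d hcd i => (hm c i).mono (hm d i) (image_mono (Iic_subset_Iic.2 hcd)))
    fun c d hcd => ?_).trans (mk_sigma_insert_top_le hν hI hS)
  · exact ((Order.lt_succ ν).trans_le (hα.symm.trans_le (Order.cof_le hCα))).not_ge hcard
  · obtain ⟨σ, hσ, hσd⟩ := hproj α c d hcd ⟨δ, hfE.mono fun i hi => by
      rintro _ ⟨k, hk, rfl⟩ -
      exact (hi _ (hCE' ⟨k, hk⟩)).le⟩
    obtain ⟨i, hlt, hle⟩ := (hσd.and_eventually hσ).exists
    have hmσ : m c i ≤ f σ i := (hm c i).2 <| forall_mem_image.2 fun k hk =>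
      hle k ⟨k, k.2, rfl⟩ hk
    exact ⟨i, (proj_mono _ hmσ).trans_lt (hlt.trans_le ((hm d i).1 ⟨d, mem_Iic.2 le_rfl, rfl⟩))⟩

/-- A least upper bound of the sequence `f` modulo the filter `L`. -/
structure IsLUBMod {Q : I → Type u} [∀ i, LE (Q i)] (L : Filter I) (f : W → ∀ i, Q i)
    (p : ∀ i, Q i) : Prop where
  eventually_le : ∀ ζ, ∀ᶠ i in L, f ζ i ≤ p i
  eventually_le_of_forall : ∀ q : ∀ i, Q i, (∀ ζ, ∀ᶠ i in L, f ζ i ≤ q i) → ∀ᶠ i in L, p i ≤ q i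

omit [∀ i, OrderTop (P i)] in
theorem exists_forall_exists_gt_le {Θ : Type u} [LinearOrder Θ] [Nonempty Θ]
    (h : #I < Order.cof Θ) (u : Θ → ∀ i, P i) : ∃ α, ∀ i, ∃ β > α, u α i ≤ u β i := by
  have hbound i : ∃ α₀, ∀ α > α₀, ∃ β > α, u α i ≤ u β i := by
    by_cases hne : {α | ∀ β > α, u β i < u α i}.Nonempty
    · obtain ⟨_, ⟨α₀, hα₀, rfl⟩, hmin⟩ := exists_isLeast_of_nonempty (hne.image fun α => u α i)
      refine ⟨α₀, fun α hα => ?_⟩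
      by_contra! hdec
      exact (hα₀ α hα).not_ge (hmin ⟨α, hdec, rfl⟩)
    · obtain ⟨α₀⟩ := ‹Nonempty Θ›
      refine ⟨α₀, fun α _ => ?_⟩
      by_contra! hdec
      exact hne ⟨α, hdec⟩
  choose α₀ hα₀ using hbound
  obtain ⟨α, hα⟩ := exists_forall_lt_of_mk_lt_cof α₀ h
  exact ⟨α, fun i => hα₀ i α (hα i)⟩

-- A counterexample yields upper bounds descending for `ν⁺` steps, each one strictly below the
-- projection of `f` to the set of the previous ones.
theorem BoundingProjection.exists_isLUBMod (hb : BoundingProjection L ν f)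
    (hf : ∀ ⦃ζ s⦄, ζ < s → ∀ᶠ i in L, f ζ i < f s i) (hν : ℵ₀ ≤ ν) (hI : #I ≤ ν)
    (hνW : Order.succ ν < Order.cof W) : ∃ p, IsLUBMod L f p := by
  by_contra! hcon
  have hμ := isRegular_succ hν
  have := nonempty_ord_toType hμ
  let S (α : (Order.succ ν).ord.ToType) (p : Iio α → ∀ i, P i) (i : I) : Set (P i) :=
    range fun β => p β i
  obtain ⟨w, hw⟩ := exists_forall_restrict (R := (Order.succ ν).ord.ToType)
    (P := fun α p w => ∃ ξ, (∀ ζ, ∀ᶠ i in L, f ζ i ≤ w i) ∧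
      ∃ᶠ i in L, w i < proj (S α p i) (f ξ i)) fun α p => by
        obtain ⟨ξ, hξ⟩ := hb (S α p) fun i =>
          mk_range_le.trans (Order.lt_succ_iff.1 (mk_Iio_ord_toType_lt α))
        by_contra! hlub
        refine hcon _ ⟨hξ, fun q hq => ?_⟩
        simpa only [Filter.not_frequently, not_lt] using hlub q ξ hq
  choose ξ hwf hwξ using hw
  obtain ⟨x, hx⟩ := exists_forall_lt_of_mk_lt_cof ξ (by rwa [mk_ord_toType])
  obtain ⟨α, hα⟩ := exists_forall_exists_gt_le (P := P)
    (by rw [cof_ord_toType hμ]; exact Order.lt_succ_of_le hI)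
    fun α i => proj (S α (fun β => w β) i) (f x i)
  obtain ⟨i, hwi, hξx, hxw⟩ := ((hwξ α).and_eventually ((hf (hx α)).and (hwf α x))).exists
  obtain ⟨β, hαβ, hle⟩ := hα i
  have hβ : proj (S β (fun β => w β) i) (f x i) ≤ w α i :=
    proj_le hxw (mem_insert_of_mem _ ⟨⟨α, hαβ⟩, rfl⟩)
  exact ((hle.trans hβ).trans_lt hwi).not_ge (proj_mono _ hξx.le)

theorem BoundingProjection.eventually_lt_cof [NoMaxOrder W] {p : ∀ i, P i}
    (hb : BoundingProjection L ν f) (hf : ∀ ⦃ζ s⦄, ζ < s → ∀ᶠ i in L, f ζ i < f s i)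
    (hp : IsLUBMod L f p) : ∀ᶠ i in L, ν < Order.cof (Iio (p i)) := by
  classical
  choose c hc_cof hc_card using fun i => Order.exists_cof_eq (Iio (p i))
  obtain ⟨ξ, hξ⟩ := hb (fun i => if Order.cof (Iio (p i)) ≤ ν then Subtype.val '' c i else ∅)
    fun i => by
      split_ifs with h
      · exact mk_image_le.trans ((hc_card i).trans_le h)
      · simp only [mk_eq_zero, zero_le]
  obtain ⟨ξ', hξ'⟩ := exists_gt ξ
  filter_upwards [hp.eventually_le_of_forall _ hξ, hf hξ', hp.eventually_le ξ'] with i hproj hlt hle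
  by_contra! hcof
  rw [if_pos hcof] at hproj
  obtain ⟨d, hd, hξd⟩ := hc_cof i ⟨f ξ i, hlt.trans_le hle⟩
  exact (hproj.trans (proj_le hξd (mem_insert_of_mem _ ⟨d, hd, rfl⟩))).not_gt d.2

end BoundingProjection

section Scale

variable {I W : Type u} [LinearOrder W] [WellFoundedLT W] {κ : Cardinal.{u}} {k : I → Cardinal.{u}}
  {L : Filter I}

theorem exists_forall_mk_le_eventually_mem {X : Type u} (hX : #X ≤ κ)
    (hk : ∀ ν < κ, ∀ᶠ i in L, ν < k i) :
    ∃ A : I → Set X, (∀ i, #(A i) ≤ k i) ∧ ∀ x, ∀ᶠ i in L, x ∈ A i := by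
  rw [← mk_ord_toType κ] at hX
  obtain ⟨e⟩ := hX
  let o x : Iio κ.ord := Ordinal.ToType.mk.symm (e x)
  have ho : Function.Injective o := Ordinal.ToType.mk.symm.injective.comp e.injective
  refine ⟨fun i => {x | (o x : Ordinal) < (k i).ord}, fun i => ?_,
    fun x => (hk _ (lt_ord.1 (o x).2)).mono fun i hi =>
      (lt_ord.2 hi : (o x : Ordinal) < (k i).ord)⟩
  rw [← mk_ord_toType (k i)]
  refine mk_le_of_injective (f := fun x => Ordinal.ToType.mk ⟨o x, x.2⟩) fun x y hxy => ?_
  have hoxy := congrArg Subtype.val (Ordinal.ToType.mk.injective hxy)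
  exact Subtype.ext (ho (Subtype.ext hoxy))

theorem exists_forall_mem_lt {Q : I → Type u} [∀ i, LinearOrder (Q i)]
    (B : ∀ s : W, I → Set (Iio s)) (hB : ∀ s i, #(B s i) < Order.cof (Q i)) :
    ∃ f : W → ∀ i, Q i, ∀ s i, ∀ ζ ∈ B s i, f ζ i < f s i :=
  exists_forall_restrict (P := fun s p (w : ∀ i, Q i) => ∀ i, ∀ ζ ∈ B s i, p ζ i < w i)
    fun s p => by
      choose w hw using fun i => exists_forall_lt_of_mk_lt_cof (fun ζ : B s i => p ζ i) (hB s i)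
      exact ⟨w, fun i ζ hζ => hw i ⟨ζ, hζ⟩⟩

theorem exists_stronglyIncreasing (hk : ∀ ν < κ, ∀ᶠ i in L, ν < k i) (hk₀ : ∀ i, ℵ₀ ≤ k i)
    (hW : ∀ s : W, #(Iio s) ≤ κ) :
    ∃ f : W → ∀ i, (Order.succ (k i)).ord.ToType, StronglyIncreasing κ L f := by
  choose A hA_card hA using fun s => exists_forall_mk_le_eventually_mem (hW s) hk
  have hclub (s : W) : ∃ E : Set (Iio s), ∀ C : Set (Iio s), IsClub C → #C < κ →
      IsClub E ∧ #E < κ := by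
    by_cases h : ∃ C : Set (Iio s), IsClub C ∧ #C < κ
    · exact h.imp fun E hE _ _ _ => hE
    · exact ⟨∅, fun C hC hCκ => absurd ⟨C, hC, hCκ⟩ h⟩
  choose E hE using hclub
  obtain ⟨f, hf⟩ := exists_forall_mem_lt (Q := fun i => (Order.succ (k i)).ord.ToType)
    (fun s i => A s i ∪ {ζ | ζ ∈ E s ∧ #(E s) ≤ k i}) fun s i => by
      rw [cof_ord_toType (isRegular_succ (hk₀ i)), Order.lt_succ_iff]
      refine (mk_union_le _ _).trans (add_le_of_le (hk₀ i) (hA_card s i) ?_)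
      by_cases hEk : #(E s) ≤ k i
      · exact (mk_le_mk_of_subset fun ζ hζ => hζ.1).trans hEk
      · simp only [hEk, and_false, ofPred_false, mk_eq_zero, zero_le]
  refine ⟨f, fun ζ s hζ => (hA s ⟨ζ, hζ⟩).mono fun i hi => hf s i _ (Or.inl hi),
    fun s C hC hCκ => ?_⟩
  obtain ⟨hEs, hEκ⟩ := hE s C hC hCκ
  exact ⟨E s, hEs, (hk _ hEκ).mono fun i hi ζ hζ => hf s i ζ (Or.inr ⟨hζ, hi.le⟩)⟩

theorem StronglyIncreasing.exists_isLUBMod {P : I → Type u} [∀ i, LinearOrder (P i)]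
    [∀ i, WellFoundedLT (P i)] [∀ i, OrderTop (P i)] {f : W → ∀ i, P i}
    (hf : StronglyIncreasing κ L f) (hκ : ∀ ν < κ, Order.succ ν < κ) (hκ₀ : ℵ₀ < κ) (hI : #I < κ)
    (hκW : κ ≤ Order.cof W) :
    ∃ p, IsLUBMod L f p ∧ ∀ ν < κ, ∀ᶠ i in L, ν < Order.cof (Iio (p i)) := by
  have hbp {ν} (hν : ℵ₀ ≤ ν) (hIν : #I ≤ ν) (hνκ : ν < κ) : BoundingProjection L ν f :=
    hf.boundingProjection hν hIν (hκ _ (hκ _ (hκ _ hνκ))) hκW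
  have := noMaxOrder_of_aleph0_le_cof (hκ₀.le.trans hκW)
  have hμ := max_lt hκ₀ hI
  obtain ⟨p, hp⟩ := (hbp (le_max_left _ _) (le_max_right _ _) hμ).exists_isLUBMod
    hf.eventually_lt (le_max_left _ _) (le_max_right _ _) ((hκ _ hμ).trans_le hκW)
  refine ⟨p, hp, fun ν hν => ?_⟩
  have hle := le_max_right ν (max ℵ₀ #I)
  exact ((hbp ((le_max_left _ _).trans hle) ((le_max_right _ _).trans hle)
    (max_lt hν hμ)).eventually_lt_cof hf.eventually_lt hp).mono fun i => (le_max_left _ _).trans_lt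

end Scale

section Indecomposable

variable {α : Type v} {U : Ultrafilter α} {μ κ : Cardinal.{u}}

/-- Every function from `U` to a set of size at most `κ` takes at most `μ` values modulo `U`. -/
def IndecomposableBetween (U : Ultrafilter α) (μ κ : Cardinal.{u}) : Prop :=
  ∀ ⦃Y : Type u⦄, #Y ≤ κ → ∀ f : α → Y, ∃ T : Set Y, #T ≤ μ ∧ ∀ᶠ s in U, f s ∈ T

theorem IndecomposableBetween.map (hU : IndecomposableBetween U μ κ) {β : Type*} (e : α → β) :
    IndecomposableBetween (U.map e) μ κ :=
  fun _ hY f => hU hY (f ∘ e)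

theorem IndecomposableBetween.mono {μ' : Cardinal.{u}} (hU : IndecomposableBetween U μ κ)
    (h : μ ≤ μ') : IndecomposableBetween U μ' κ :=
  fun _ hY f => (hU hY f).imp fun _ hT => ⟨hT.1.trans h, hT.2⟩

theorem IndecomposableBetween.exists_eventually_lt (hU : IndecomposableBetween U μ κ) {Y : Type u}
    [LinearOrder Y] (hY : #Y ≤ κ) (hμ : μ < Order.cof Y) (f : α → Y) :
    ∃ y, ∀ᶠ s in U, f s < y := by
  obtain ⟨T, hT, hfT⟩ := hU hY f
  obtain ⟨y, hy⟩ := exists_forall_lt_of_mk_lt_cof ((↑) : T → Y) (hT.trans_lt hμ)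
  exact ⟨y, hfT.mono fun s hs => hy ⟨_, hs⟩⟩

theorem IndecomposableBetween.eventually_lt_mk (hU : IndecomposableBetween U μ κ) {ν : Cardinal.{u}}
    (hν : ℵ₀ ≤ ν) (hμν : μ ≤ ν) (hνκ : Order.succ ν ≤ κ) {Y : Type u} {T : Set Y} (hT : ν < #T)
    {F : α → Set Y} (hF : ∀ y ∈ T, ∀ᶠ s in U, y ∈ F s) : ∀ᶠ s in U, ν < #(F s) := by
  by_contra! hcon
  have hcof := cof_ord_toType (isRegular_succ hν)
  obtain ⟨t⟩ : #(Order.succ ν).ord.ToType ≤ #T := by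
    rw [mk_ord_toType]
    exact Order.succ_le_of_lt hT
  have hbdd s : ∃ b, #(F s) ≤ ν → ∀ n, (t n : Y) ∈ F s → n < b := by
    by_cases hs : #(F s) ≤ ν
    · have hcard : #((fun n => (t n : Y)) ⁻¹' F s) ≤ ν :=
        (mk_preimage_of_injective _ _ (Subtype.val_injective.comp t.injective)).trans hs
      obtain ⟨b, hb⟩ := exists_forall_lt_of_mk_lt_cof
        (Subtype.val : (fun n => (t n : Y)) ⁻¹' F s → (Order.succ ν).ord.ToType)
        (by rw [hcof]; exact Order.lt_succ_of_le hcard)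
      exact ⟨b, fun _ n hn => hb ⟨n, hn⟩⟩
    · exact ⟨(nonempty_ord_toType (isRegular_succ hν)).some, fun h => absurd h hs⟩
  choose b hb using hbdd
  obtain ⟨n, hn⟩ := hU.exists_eventually_lt (by rwa [mk_ord_toType])
    (by rw [hcof]; exact Order.lt_succ_of_le hμν) b
  obtain ⟨s, hbn, hnF, hs⟩ := (hn.and ((hF _ (t n).2).and hcon)).exists
  exact (hb s hs n hnF).not_gt hbn

variable {W I : Type u} [LinearOrder W] [WellFoundedLT W]

theorem mk_setOf_isLUB_inter_Iio_le (A : Set W) : #{δ | IsLUB (A ∩ Iio δ) δ} ≤ #A + 1 := by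
  let S : Set (WithTop W) := (↑) '' A
  let u (δ : {δ | IsLUB (A ∩ Iio δ) δ}) : (insert ⊤ S : Set (WithTop W)) :=
    ⟨proj S (δ : W), proj_mem _ _⟩
  have hu : StrictMono u := fun δ δ' hlt => by
    obtain ⟨a, ⟨haA, haδ'⟩, hδa⟩ := (lt_isLUB_iff δ'.2).1 hlt
    have haS : (a : WithTop W) ∈ insert ⊤ S := mem_insert_of_mem _ (mem_image_of_mem _ haA)
    exact (proj_le (WithTop.coe_le_coe.2 hδa.le) haS).trans_lt
      ((WithTop.coe_lt_coe.2 haδ').trans_le (le_proj _ _))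
  refine (mk_le_of_injective hu.injective).trans (mk_insert_le.trans ?_)
  gcongr
  exact mk_image_le

omit [WellFoundedLT W] in
theorem IndecomposableBetween.exists_inter_Iio_subset_Iio (hU : IndecomposableBetween U μ κ)
    (hI : #I ≤ μ) {δ : W} (hδκ : #(Iio δ) ≤ κ) (hδ : μ < Order.cof (Iio δ)) (A : α → I → Set W) :
    ∃ β < δ, ∀ᶠ s in U, ∀ i, ¬IsLUB (A s i ∩ Iio δ) δ → A s i ∩ Iio δ ⊆ Iio β := by
  obtain ⟨y₀⟩ := Order.cof_ne_zero_iff.1 (pos_of_gt hδ).ne'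
  have hbdd s i : ∃ y : Iio δ, ¬IsLUB (A s i ∩ Iio δ) δ → A s i ∩ Iio δ ⊆ Iic y := by
    by_cases hlub : ∃ y < δ, y ∈ upperBounds (A s i ∩ Iio δ)
    · obtain ⟨y, hyδ, hy⟩ := hlub
      exact ⟨⟨y, hyδ⟩, fun _ z hz => hy hz⟩
    · refine ⟨y₀, fun h => absurd ⟨fun z hz => le_of_lt hz.2, fun y hy => ?_⟩ h⟩
      exact not_lt.1 fun hyδ => hlub ⟨y, hyδ, hy⟩
  choose y hy using hbdd
  choose b hb using fun s => exists_forall_lt_of_mk_lt_cof (y s) (hI.trans_lt hδ)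
  obtain ⟨β, hβ⟩ := hU.exists_eventually_lt hδκ hδ b
  exact ⟨β, β.2, hβ.mono fun s hs i hi z hz => (hy s i hi hz).trans_lt ((hb s i).trans hs)⟩

theorem IndecomposableBetween.exists_forall_exists_gt_inter_Iio_subset_Iio
    (hU : IndecomposableBetween U μ κ) (hμ : ℵ₀ ≤ μ) (hμW : Order.succ μ < Order.cof W)
    (hI : #I ≤ μ) (hW : ∀ x : W, #(Iio x) ≤ κ) (A : α → I → Set W) :
    ∃ β, ∀ x, ∃ δ > x, β < δ ∧
      ∀ᶠ s in U, ∀ i, ¬IsLUB (A s i ∩ Iio δ) δ → A s i ∩ Iio δ ⊆ Iio β := by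
  by_contra hcon
  simp only [not_exists, not_forall, not_and] at hcon
  choose b hb using hcon
  obtain ⟨δ, hδ, hδb⟩ := exists_cof_Iio_eq (isRegular_succ hμ) hμW b
  obtain ⟨β, hβδ, hβ⟩ := hU.exists_inter_Iio_subset_Iio hI (hW δ)
    ((Order.lt_succ μ).trans_eq hδ.symm) A
  obtain ⟨z, hzδ, hβz, hbz⟩ := hδb β hβδ
  exact hb z δ hbz hzδ (hβ.mono fun s hs i hi => (hs i hi).trans (Iio_subset_Iio hβz.le))

-- `F s` is the set of limit points of one of the small sets that cover `Iio s`.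
theorem IndecomposableBetween.exists_forall_eventually_mem {U : Ultrafilter W}
    {k : I → Cardinal.{u}} {L : Filter I} [L.NeBot] (hU : IndecomposableBetween U μ κ)
    (htop : ∀ x : W, ∀ᶠ s in U, x < s)
    (hμ : ℵ₀ ≤ μ) (hμκ : μ < κ) (hμW : Order.succ μ < Order.cof W) (hI : #I ≤ μ)
    (hW : ∀ x : W, #(Iio x) ≤ κ) (hk : ∀ ν < κ, ∀ᶠ i in L, ν < k i) (hkκ : ∀ i, k i < κ) :
    ∃ (T : Set W) (F : W → Set W), (∀ x, ∃ δ ∈ T, x < δ) ∧ (∀ δ ∈ T, ∀ᶠ s in U, δ ∈ F s) ∧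
      ∀ s, #(F s) < κ := by
  choose A hA_card hA using fun s => exists_forall_mk_le_eventually_mem (hW s) hk
  obtain ⟨β, hβ⟩ := hU.exists_forall_exists_gt_inter_Iio_subset_Iio hμ hμW hI hW
    fun s i => Subtype.val '' A s i
  have hmem s : ∃ i, β < s → β ∈ Subtype.val '' A s i := by
    by_cases hβs : β < s
    · exact (hA s ⟨β, hβs⟩).exists.imp fun i hi _ => ⟨_, hi, rfl⟩
    · exact ⟨L.nonempty_of_neBot.some, fun h => absurd h hβs⟩
  choose i hi using hmem
  refine ⟨{δ | β < δ ∧ ∀ᶠ s in U, ∀ i, ¬IsLUB (Subtype.val '' A s i ∩ Iio δ) δ →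
      Subtype.val '' A s i ∩ Iio δ ⊆ Iio β},
    fun s => {δ | IsLUB (Subtype.val '' A s (i s) ∩ Iio δ) δ},
    fun x => (hβ x).imp fun δ hδ => ⟨hδ.2, hδ.1⟩, fun δ hδ => ?_, fun s => ?_⟩
  · filter_upwards [hδ.2, htop β] with s hs hβs
    by_contra hlub
    exact lt_irrefl β (hs _ hlub ⟨hi s hβs, hδ.1⟩)
  · have hκ := hμ.trans hμκ.le
    exact (mk_setOf_isLUB_inter_Iio_le _).trans_lt (add_lt_of_lt hκ
      (mk_image_le.trans_lt ((hA_card s _).trans_lt (hkκ _))) (one_lt_aleph0.trans_le hκ))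

omit [WellFoundedLT W] in
theorem IsLUBMod.not_indecomposableBetween {P : I → Type u} [∀ i, LinearOrder (P i)]
    [∀ i, WellFoundedLT (P i)] [∀ i, OrderTop (P i)] [NoMaxOrder W] {L : Filter I}
    {f : W → ∀ i, P i} {p : ∀ i, P i} {U : Ultrafilter α} (hp : IsLUBMod L f p)
    (hf : ∀ ⦃ζ s⦄, ζ < s → ∀ᶠ i in L, f ζ i < f s i) (hbp : BoundingProjection L μ f)
    (hP : #(Σ i, P i) ≤ κ) {T : Set W} {F : α → Set W} (hT : ∀ x, ∃ δ ∈ T, x < δ)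
    (hF : ∀ δ ∈ T, ∀ᶠ s in U, δ ∈ F s) {g : α → I} (hg : Filter.Tendsto g U L)
    (hFp : ∀ s, #(F s) < Order.cof (Iio (p (g s)))) : ¬IndecomposableBetween U μ κ := by
  intro hU
  choose q hq using fun s => exists_forall_lt_of_mk_lt_cof
    (fun ξ : {ξ : F s | f ξ (g s) < p (g s)} => (⟨f ξ (g s), ξ.2⟩ : Iio (p (g s))))
    ((mk_set_le _).trans_lt (hFp s))
  obtain ⟨V, hVμ, hV⟩ := hU hP fun s => ⟨g s, (q s : P (g s))⟩
  obtain ⟨ξ₀, hξ₀⟩ := hbp (fun i => {y | ⟨i, y⟩ ∈ V}) fun i =>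
    (mk_preimage_of_injective _ _ sigma_mk_injective).trans hVμ
  obtain ⟨ξ, hξT, hξ⟩ := hT ξ₀
  obtain ⟨ξ', hξ'⟩ := exists_gt ξ
  have hub ζ : ∀ᶠ i in L, f ζ i ≤ proj {y | ⟨i, y⟩ ∈ V} (f ξ i) :=
    ((hξ₀ ζ).and (hf hξ)).mono fun i hi => hi.1.trans (proj_mono _ hi.2.le)
  obtain ⟨s, hξF, hsV, hpξ, hlt, hle⟩ := ((hF ξ hξT).and (hV.and (hg.eventually
    ((hp.eventually_le_of_forall _ hub).and ((hf hξ').and (hp.eventually_le ξ')))))).exists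
  have hξq : f ξ (g s) ≤ q s := (hq s ⟨⟨ξ, hξF⟩, hlt.trans_le hle⟩).le
  exact (hpξ.trans (proj_le hξq (mem_insert_of_mem _ hsV))).not_gt (q s).2

theorem not_indecomposableBetween {U : Ultrafilter W} {k : I → Cardinal.{u}}
    {L : Filter I} [L.NeBot] (htop : ∀ x : W, ∀ᶠ s in U, x < s)
    (hμ : ℵ₀ ≤ μ) (hμκ : μ < κ) (hI : #I ≤ μ) (hκ : ∀ ν < κ, Order.succ ν < κ)
    (hκW : κ < Order.cof W) (hW : ∀ x : W, #(Iio x) ≤ κ)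
    (hL : L.HasBasis (· < κ) fun ν => {i | ν < k i}) (hk₀ : ∀ i, ℵ₀ ≤ k i) (hkκ : ∀ i, k i < κ) :
    ¬IndecomposableBetween U μ κ := by
  intro hU
  have hk ν (hν : ν < κ) : ∀ᶠ i in L, ν < k i := hL.mem_of_mem hν
  have := noMaxOrder_of_aleph0_le_cof (hμ.trans (hμκ.trans hκW).le)
  obtain ⟨T, F, hT, hF, hFκ⟩ := hU.exists_forall_eventually_mem htop hμ hμκ
    ((hκ _ hμκ).trans hκW) hI hW hk hkκ
  obtain ⟨f₀, hf₀⟩ := exists_stronglyIncreasing hk hk₀ hW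
  have hf := hf₀.comp_strictMono fun i => WithTop.coe_strictMono
  have hbp := hf.boundingProjection hμ hI (hκ _ (hκ _ (hκ _ hμκ))) hκW.le
  obtain ⟨p, hp, hpcof⟩ := hf.exists_isLUBMod hκ (hμ.trans_lt hμκ) (hI.trans_lt hμκ) hκW.le
  choose g hgp hgk using fun s => ((hpcof _ (hFκ s)).and (hk _ (hFκ s))).exists
  have hP : #(Σ i, WithTop (Order.succ (k i)).ord.ToType) ≤ κ := by
    have hk_card i : #(WithTop (Order.succ (k i)).ord.ToType) ≤ κ := by
      rw [WithTop, mk_option, mk_ord_toType]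
      exact add_le_of_le (hμ.trans hμκ.le) (hκ _ (hkκ i)).le (one_le_aleph0.trans (hμ.trans hμκ.le))
    rw [mk_sigma]
    exact (sum_le_sum _ _ hk_card).trans ((sum_const' _ _).trans_le
      (mul_le_of_le (hμ.trans hμκ.le) (hI.trans hμκ.le) le_rfl))
  refine hp.not_indecomposableBetween hf.eventually_lt hbp hP hT hF
    (hL.tendsto_right_iff.2 fun ν hν => ?_) hgp hU
  have hTκ : κ < #T := hκW.trans_le (Order.cof_le fun x => (hT x).imp fun δ hδ => ⟨hδ.1, hδ.2.le⟩)
  exact (hU.eventually_lt_mk (hμ.trans (le_max_right ν μ)) (le_max_right ν μ)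
    (hκ _ (max_lt hν hμκ)).le ((max_lt hν hμκ).trans hTκ) hF).mono fun s hs =>
      (le_max_left ν μ).trans_lt (hs.trans (hgk s))

end Indecomposable

section Uniform

variable {α : Type u} {U : Ultrafilter α} {μ κ : Cardinal.{u}}

theorem eventually_notMem_of_uniform (hU : Uniform U) {X : Set α} (hX : #X < #α) :
    ∀ᶠ s in U, s ∉ X :=
  Ultrafilter.compl_mem_iff_notMem.2 fun h => hX.ne (hU X h)

theorem exists_uniform (hα : (#α).IsRegular) : ∃ U : Ultrafilter α, Uniform U := by
  have : (Filter.cocardinal α hα).NeBot := by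
    rw [← inf_top_eq (Filter.cocardinal α hα), ← Filter.principal_univ,
      Filter.cocardinal_inf_principal_neBot_iff, mk_univ]
  refine ⟨Ultrafilter.of (Filter.cocardinal α hα), fun X hX => (mk_set_le X).antisymm ?_⟩
  by_contra! hlt
  exact Ultrafilter.compl_notMem_iff.2 hX
    (Ultrafilter.of_le _ (Filter.compl_mem_cocardinal_of_card_lt hlt))

theorem uniform_bind {I : Type u} {D : Ultrafilter I} {V : I → Ultrafilter α}
    {k : I → Cardinal.{u}} (hV : ∀ i, ∀ X ∈ V i, k i < #X) (hD : ∀ ν < #α, ∀ᶠ i in D, ν < k i) :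
    Uniform (D.bind V) := by
  refine fun X hX => (mk_set_le X).antisymm ?_
  by_contra! hlt
  have hXV : ∀ᶠ i in D, X ∈ V i := hX
  obtain ⟨i, hXi, hi⟩ := (hXV.and (hD _ hlt)).exists
  exact (hV i X hXi).not_gt hi

theorem aleph0_lt_of_isSingular (hκ : κ.IsSingular) : ℵ₀ < κ :=
  hκ.aleph0_le.lt_of_ne fun h => not_isSingular_aleph0 (h ▸ hκ)

theorem exists_filter_hasBasis_lt (hκ : Order.IsSuccLimit κ) (hκ₀ : ℵ₀ < κ) :
    ∃ (I : Type u) (k : I → Cardinal.{u}) (L : Filter I), #I = κ.ord.cof ∧ (∀ i, ℵ₀ ≤ k i) ∧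
      (∀ i, k i < κ) ∧ L.NeBot ∧ L.HasBasis (· < κ) fun ν => {i | ν < k i} := by
  obtain ⟨s, hs, hs_card⟩ := Order.exists_cof_eq κ.ord.ToType
  let k (i : s) : Cardinal.{u} := max ℵ₀ (Ordinal.ToType.mk.symm (i : κ.ord.ToType)).1.card
  have hL : (⨅ ν, ⨅ _ : ν < κ, Filter.principal {i | ν < k i}).HasBasis (· < κ)
      fun ν => {i | ν < k i} :=
    Filter.hasBasis_biInf_principal' (fun ν hν ν' hν' => ⟨max ν ν', max_lt hν hν',
      fun i (hi : _ < k i) => (le_max_left _ _).trans_lt hi,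
      fun i (hi : _ < k i) => (le_max_right _ _).trans_lt hi⟩)
      ⟨ℵ₀, hκ₀⟩
  refine ⟨s, k, _, by rw [hs_card, Ordinal.cof_toType], fun i => le_max_left _ _,
    fun i => max_lt hκ₀ (lt_ord.1 (Ordinal.ToType.mk.symm (i : κ.ord.ToType)).2),
    hL.neBot_iff.2 fun {ν} hν => ?_, hL⟩
  obtain ⟨i, hi, hle⟩ := hs (Ordinal.ToType.mk ⟨(Order.succ ν).ord, ord_lt_ord.2 (hκ.succ_lt hν)⟩)
  have hle' := (OrderIso.le_symm_apply _).2 hle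
  exact ⟨⟨i, hi⟩, (Order.lt_succ ν).trans_le ((ord_le.1 hle').trans (le_max_right _ _))⟩

theorem not_indecomposableBetween_of_uniform (hκ : κ.IsSingular) (hα : #α = Order.succ κ)
    (hU : Uniform U) (hμκ : μ < κ) : ¬IndecomposableBetween U μ κ := by
  intro hUμ
  have hreg := isRegular_succ hκ.aleph0_le
  have hκ₀ : ℵ₀ < κ := aleph0_lt_of_isSingular hκ
  obtain ⟨I, k, L, hI, hk₀, hkκ, _, hL⟩ := exists_filter_hasBasis_lt hκ.isSuccLimit hκ₀
  obtain ⟨e⟩ : Nonempty (α ≃ (Order.succ κ).ord.ToType) := by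
    rw [← Cardinal.eq, hα, mk_ord_toType]
  have := noMaxOrder_ord_toType hreg
  refine not_indecomposableBetween (U := U.map e) (μ := max μ (max ℵ₀ #I)) (fun x => ?_)
    ((le_max_left _ _).trans (le_max_right _ _))
    (max_lt hμκ (max_lt hκ₀ (hI.trans_lt hκ.cof_ord_lt)))
    ((le_max_right _ _).trans (le_max_right _ _)) (fun ν => hκ.isSuccLimit.succ_lt)
    ((Order.lt_succ κ).trans_eq (cof_ord_toType hreg).symm)
    (fun x => Order.lt_succ_iff.1 (mk_Iio_ord_toType_lt x)) hL hk₀ hkκ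
    ((hUμ.map e).mono (le_max_left _ _))
  obtain ⟨y, hxy⟩ := exists_gt x
  have hcard : #(e ⁻¹' Iio y) < #α :=
    ((mk_preimage_of_injective _ _ e.injective).trans_lt (mk_Iio_ord_toType_lt y)).trans_eq hα.symm
  exact (eventually_notMem_of_uniform hU hcard).mono fun s hs => hxy.trans_le (not_lt.1 hs)

theorem exists_forall_lt_mk_of_uniform (hκ : κ.IsSingular) (hα : #α = Order.succ κ)
    (hU : Uniform U) (hμκ : μ < κ) : ∃ f : α → κ.out, ∀ X ∈ U.map f, μ < #X := by
  by_contra! hcon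
  refine not_indecomposableBetween_of_uniform hκ hα hU hμκ fun Y hY f => ?_
  rw [← mk_out κ] at hY
  obtain ⟨j⟩ := hY
  obtain ⟨X, hX, hXμ⟩ := hcon (j ∘ f)
  exact ⟨j ⁻¹' X, (mk_preimage_of_injective _ _ j.injective).trans hXμ, hX⟩

end Uniform

section Character

variable {α β I : Type u}

theorem exists_base (U : Ultrafilter α) :
    ∃ B : Set (Set α), #B = charU U ∧ (∀ X ∈ B, X ∈ U) ∧ ∀ Y ∈ U, ∃ X ∈ B, X ⊆ Y :=
  csInf_mem (s := {c | ∃ B : Set (Set α), #B = c ∧ (∀ X ∈ B, X ∈ U) ∧ ∀ Y ∈ U, ∃ X ∈ B, X ⊆ Y})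
    ⟨_, {X | X ∈ U}, rfl, fun _ hX => hX, fun Y hY => ⟨Y, hY, subset_rfl⟩⟩

theorem charU_le_mk {U : Ultrafilter α} {B : Set (Set α)} (hBU : ∀ X ∈ B, X ∈ U)
    (hB : ∀ Y ∈ U, ∃ X ∈ B, X ⊆ Y) : charU U ≤ #B :=
  csInf_le' ⟨B, rfl, hBU, hB⟩

theorem charU_le_two_power (U : Ultrafilter α) : charU U ≤ 2 ^ #α :=
  (charU_le_mk (B := {X | X ∈ U}) (fun _ hX => hX) fun Y hY => ⟨Y, hY, subset_rfl⟩).trans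
    ((mk_set_le _).trans_eq mk_set)

theorem two_le_charU {U : Ultrafilter α} (hα : 1 < #α) (hU : Uniform U) : 2 ≤ charU U := by
  obtain ⟨B, hB_card, hBU, hB⟩ := exists_base U
  obtain ⟨X, hX, -⟩ := hB univ Filter.univ_mem
  obtain ⟨x, hx⟩ := Ultrafilter.nonempty_of_mem (hBU X hX)
  have hx' : {x}ᶜ ∈ U := eventually_notMem_of_uniform hU (by rwa [mk_singleton])
  obtain ⟨Y, hY, hYx⟩ := hB _ hx'
  rw [← hB_card, two_le_iff]
  exact ⟨⟨X, hX⟩, ⟨Y, hY⟩, fun h => hYx (Subtype.mk.inj h ▸ hx : x ∈ Y) rfl⟩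

theorem charU_map_le (U : Ultrafilter α) (f : α → β) : charU (U.map f) ≤ charU U := by
  obtain ⟨B, hB_card, hBU, hB⟩ := exists_base U
  rw [← hB_card]
  refine (charU_le_mk (B := image f '' B) ?_ fun Y hY => ?_).trans mk_image_le
  · rintro _ ⟨X, hX, rfl⟩
    exact Filter.image_mem_map (hBU X hX)
  · obtain ⟨X, hX, hXY⟩ := hB _ hY
    exact ⟨_, mem_image_of_mem _ hX, image_subset_iff.2 hXY⟩

theorem charU_bind_le (D : Ultrafilter I) (V : I → Ultrafilter β) :
    charU (D.bind V) ≤ prod (fun i => charU (V i)) * charU D := by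
  choose B hB_card hBV hB using fun i => exists_base (V i)
  obtain ⟨C, hC_card, hCD, hC⟩ := exists_base D
  let G (x : (∀ i, B i) × C) : Set β := ⋃ i ∈ (x.2 : Set I), x.1 i
  have hG : charU (D.bind V) ≤ #(range G) := by
    refine charU_le_mk ?_ fun Y hY => ?_
    · rintro _ ⟨⟨b, d⟩, rfl⟩
      have hmem : ∀ᶠ i in D, G ⟨b, d⟩ ∈ V i := Filter.mem_of_superset (hCD d d.2) fun i hi =>
        Filter.mem_of_superset (hBV i _ (b i).2) (subset_biUnion_of_mem (u := fun i => (b i).1) hi)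
      exact hmem
    · obtain ⟨d, hd, hdY⟩ := hC {i | Y ∈ V i} hY
      have hb i : ∃ b : B i, Y ∈ V i → b.1 ⊆ Y := by
        by_cases hYi : Y ∈ V i
        · obtain ⟨X, hX, hXY⟩ := hB i Y hYi
          exact ⟨⟨X, hX⟩, fun _ => hXY⟩
        · obtain ⟨X, hX, -⟩ := hB i univ Filter.univ_mem
          exact ⟨⟨X, hX⟩, fun h => absurd h hYi⟩
      choose b hb using hb
      exact ⟨_, ⟨⟨b, d, hd⟩, rfl⟩, iUnion₂_subset fun i hi => hb i (hdY hi)⟩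
  refine hG.trans (mk_range_le.trans_eq ?_)
  rw [mk_prod, lift_id, lift_id, mk_pi, hC_card]
  simp only [hB_card]

end Character

section UltrafilterNumber

variable {κ : Cardinal.{u}}

theorem uNumber_le_charU {U : Ultrafilter κ.out} (hU : Uniform U) : uNumber κ ≤ charU U :=
  csInf_le' ⟨U, hU, rfl⟩

theorem exists_uniform_charU_eq_uNumber (hκ : κ.IsRegular) :
    ∃ U : Ultrafilter κ.out, Uniform U ∧ charU U = uNumber κ := by
  rw [← mk_out κ] at hκ
  obtain ⟨U, hU⟩ := exists_uniform hκ
  exact csInf_mem (s := {c | ∃ U : Ultrafilter κ.out, Uniform U ∧ charU U = c}) ⟨_, U, hU, rfl⟩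

theorem uNumber_le_two_power (hκ : κ.IsRegular) : uNumber κ ≤ 2 ^ κ := by
  obtain ⟨U, -, hU⟩ := exists_uniform_charU_eq_uNumber hκ
  exact hU.symm.trans_le ((charU_le_two_power U).trans_eq (by rw [mk_out]))

theorem uNumber_le_charU_power {α : Type u} {U : Ultrafilter α} (hκ : κ.IsSingular)
    (hα : #α = Order.succ κ) (hU : Uniform U) : uNumber κ ≤ charU U ^ κ.ord.cof := by
  have hκ₀ : ℵ₀ < κ := aleph0_lt_of_isSingular hκ
  obtain ⟨I, k, L, hI, -, hkκ, _, hL⟩ := exists_filter_hasBasis_lt hκ.isSuccLimit hκ₀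
  choose f hf using fun i => exists_forall_lt_mk_of_uniform hκ hα hU (hkκ i)
  let D := Ultrafilter.of L
  let V := D.bind fun i => U.map (f i)
  have hV : Uniform V := uniform_bind hf fun ν hν =>
    Ultrafilter.of_le L (hL.mem_of_mem (hν.trans_eq (mk_out κ)))
  have hprod : prod (fun i => charU (U.map (f i))) ≤ charU U ^ #I :=
    (prod_le_prod _ _ fun i => charU_map_le U (f i)).trans_eq (prod_const' _ _)
  have hpow : 2 ^ #I ≤ charU U ^ #I := power_le_power_right
    (two_le_charU (hα ▸ one_lt_aleph0.trans_le (hκ.aleph0_le.trans (Order.le_succ κ))) hU)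
  have hI₀ : ℵ₀ ≤ #I := hI ▸ Ordinal.aleph0_le_cof_iff.2
    (Ordinal.one_lt_cof_iff.2 (isSuccLimit_ord hκ.aleph0_le))
  calc uNumber κ ≤ charU V := uNumber_le_charU hV
    _ ≤ prod (fun i => charU (U.map (f i))) * charU D := charU_bind_le D _
    _ ≤ charU U ^ #I * charU U ^ #I := mul_le_mul' hprod ((charU_le_two_power D).trans hpow)
    _ = charU U ^ κ.ord.cof := by
      rw [mul_eq_self (hI₀.trans ((cantor _).le.trans hpow)), hI]

end UltrafilterNumber

/-- `u(κ) ≤ u(κ⁺)^{cf(κ)}` for every infinite cardinal `κ`. -/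
theorem stmt18 (κ : Cardinal.{u}) (hκ : ℵ₀ ≤ κ) :
    uNumber κ ≤ uNumber (Order.succ κ) ^ κ.ord.cof := by
  obtain ⟨U, hU, hUκ⟩ := exists_uniform_charU_eq_uNumber (isRegular_succ hκ)
  rw [← hUκ]
  rcases isRegular_or_isSingular hκ with hreg | hsing
  · have hU₂ : 2 ≤ charU U := two_le_charU
      (by rw [mk_out]; exact one_lt_aleph0.trans_le (hκ.trans (Order.le_succ κ))) hU
    calc uNumber κ ≤ 2 ^ κ := uNumber_le_two_power hreg
      _ ≤ charU U ^ κ := power_le_power_right hU₂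
      _ = charU U ^ κ.ord.cof := by rw [hreg.cof_ord]
  · exact uNumber_le_charU_power hsing (mk_out _) hU
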